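/- Let A = {n ∈ ℕ : for every i ∈ ℕ, if 4 divides ⌊n/2^i⌋ then ⌊n/2^i⌋ = 0}, B = {n ∈ A : n is odd}, and let α, β ∈ 𝔽₂⟦t⟧ be the power series whose n-th coefficient is 1 exactly when n ∈ A, respectively n ∈ B. Regard α and β as elements of the Laurent series field 𝔽₂((t)) and consider the 3×3 matrices over 𝔽₂((t)): s = [[0, 0, α], [1 + tα, β, α], [tα, 1, β]] and ρ = [[0, 0, t⁻¹], [1, 0, 0], [0, 1, 0]]. Then t·(sρ)³ = 1, t·(s³ρ)³ = 1, and s⁷ = 1, where 1 denotes the 3×3 identity matrix and t·M denotes scalar multiplication of a matrix M by t. -/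

import Mathlib

open scoped Classical

/-- The power series `α ∈ 𝔽₂⟦t⟧` whose `n`-th coefficient is `1` exactly when the binary
expansion of `n` contains no two consecutive zeros. -/
noncomputable def alphaSeries : PowerSeries (ZMod 2) :=
  PowerSeries.mk fun n => if ∀ i : ℕ, 4 ∣ n / 2 ^ i → n / 2 ^ i = 0 then 1 else 0

/-- The power series `β ∈ 𝔽₂⟦t⟧` whose `n`-th coefficient is `1` exactly when `n` is odd and
the binary expansion of `n` contains no two consecutive zeros. -/
noncomputable def betaSeries : PowerSeries (ZMod 2) :=
  PowerSeries.mk fun n =>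
    if (∀ i : ℕ, 4 ∣ n / 2 ^ i → n / 2 ^ i = 0) ∧ Odd n then 1 else 0

/-- `α` regarded as a Laurent series. -/
noncomputable def αL : LaurentSeries (ZMod 2) :=
  HahnSeries.ofPowerSeries ℤ (ZMod 2) alphaSeries

/-- `β` regarded as a Laurent series. -/
noncomputable def βL : LaurentSeries (ZMod 2) :=
  HahnSeries.ofPowerSeries ℤ (ZMod 2) betaSeries

/-- `t` regarded as a Laurent series. -/
noncomputable def tL : LaurentSeries (ZMod 2) :=
  HahnSeries.ofPowerSeries ℤ (ZMod 2) PowerSeries.X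

/-!
Every natural number is `2 * m` or `2 * m + 1`, and `f(t) ^ 2 = f(t ^ 2)` over `𝔽₂`;
so the recursion for binary expansions without `00` becomes the pair of functional equations
`β = t * α ^ 2` and `α = 1 + β + β ^ 2`.

These equations make `X ^ 3 + X + 1` the characteristic polynomial of `s`. Hence `s ^ 3 = s + 1`,
and `s ^ 7 = 1` because `X ^ 3 + X + 1` divides `X ^ 7 - 1` over `𝔽₂`. For every scalar `c` the
matrix `(s + c) * ρ` has vanishing linear and quadratic characteristic coefficients, so its cube is
its determinant `(c ^ 3 + c + 1) * t⁻¹`. The cases `c = 0` and `c = 1` are the other two relations,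
since `s ^ 3 = s + 1`.
-/

/-- The binary expansion of `n` contains no two consecutive zeros. As `n / 2 ^ i` drops the last
`i` digits, this is the condition on exponents occurring in `alphaSeries`. -/
def NoDoubleZero (n : ℕ) : Prop :=
  ∀ i : ℕ, 4 ∣ n / 2 ^ i → n / 2 ^ i = 0

theorem noDoubleZero_iff_div_two (n : ℕ) :
    NoDoubleZero n ↔ (4 ∣ n → n = 0) ∧ NoDoubleZero (n / 2) := by
  simp only [NoDoubleZero, Nat.div_div_eq_div_mul, ← pow_succ']
  refine ⟨fun h ↦ ⟨by simpa using h 0, fun i ↦ h (i + 1)⟩, ?_⟩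
  rintro ⟨h_zero, h_succ⟩ (_ | i)
  · simpa using h_zero
  · exact h_succ i

theorem noDoubleZero_zero : NoDoubleZero 0 := by
  simp [NoDoubleZero]

theorem noDoubleZero_two_mul_add_one (m : ℕ) : NoDoubleZero (2 * m + 1) ↔ NoDoubleZero m := by
  rw [noDoubleZero_iff_div_two, show (2 * m + 1) / 2 = m by omega]
  exact and_iff_right (by omega)

theorem noDoubleZero_two_mul {m : ℕ} (hm : m ≠ 0) :
    NoDoubleZero (2 * m) ↔ NoDoubleZero m ∧ Odd m := by
  rw [noDoubleZero_iff_div_two, show 2 * m / 2 = m by omega, and_comm, Nat.odd_iff]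
  exact and_congr_right' (by omega)

section PowerSeries

open PowerSeries

theorem powerSeries_expand_zmod_eq_pow {p : ℕ} [Fact p.Prime] (f : (ZMod p)⟦X⟧) :
    f.expand p (NeZero.ne p) = f ^ p := by
  have h : (f.expand p (NeZero.ne p)).map (frobenius (ZMod p) p) = f ^ p :=
    MvPowerSeries.map_frobenius_expand p (NeZero.ne p)
  rwa [ZMod.frobenius_zmod, PowerSeries.map_id] at h

theorem coeff_pow_zmod {p : ℕ} [Fact p.Prime] (f : (ZMod p)⟦X⟧) (n : ℕ) :
    coeff n (f ^ p) = if p ∣ n then coeff (n / p) f else 0 := by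
  rw [← powerSeries_expand_zmod_eq_pow, coeff_expand]

theorem coeff_alphaSeries (n : ℕ) :
    coeff n alphaSeries = if NoDoubleZero n then 1 else 0 :=
  coeff_mk n _

theorem coeff_betaSeries (n : ℕ) :
    coeff n betaSeries = if NoDoubleZero n ∧ Odd n then 1 else 0 := by
  simp [betaSeries, NoDoubleZero]

theorem betaSeries_eq_X_mul_alphaSeries_sq : betaSeries = X * alphaSeries ^ 2 := by
  ext (_ | n)
  · simp [coeff_betaSeries]
  rw [coeff_succ_X_mul, coeff_pow_zmod, coeff_betaSeries, coeff_alphaSeries]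
  obtain ⟨m, rfl | rfl⟩ := n.even_or_odd'
  · simp [noDoubleZero_two_mul_add_one]
  · have h_not_odd : ¬ Odd (2 * m + 1 + 1) := by simp [parity_simps]
    have h_not_dvd : ¬ 2 ∣ 2 * m + 1 := by omega
    simp [h_not_odd, h_not_dvd]

theorem alphaSeries_eq_one_add_betaSeries_add_sq :
    alphaSeries = 1 + betaSeries + betaSeries ^ 2 := by
  ext n
  simp only [map_add, coeff_one, coeff_pow_zmod, coeff_alphaSeries, coeff_betaSeries]
  obtain ⟨m, rfl | rfl⟩ := n.even_or_odd'
  · obtain rfl | hm := eq_or_ne m 0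
    · simp [noDoubleZero_zero]
    · simp [noDoubleZero_two_mul hm, hm]
  · have h_not_dvd : ¬ 2 ∣ 2 * m + 1 := by omega
    simp [h_not_dvd]

end PowerSeries

section LaurentSeries

theorem charP_laurentSeries (R : Type*) [Semiring R] (p : ℕ) [CharP R p] :
    CharP (LaurentSeries R) p :=
  charP_of_injective_ringHom HahnSeries.C_injective p

theorem tL_ne_zero : tL ≠ 0 :=
  (map_ne_zero_iff _ HahnSeries.ofPowerSeries_injective).mpr PowerSeries.X_ne_zero

theorem βL_eq_tL_mul_αL_sq : βL = tL * αL ^ 2 := by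
  simp only [βL, tL, αL, betaSeries_eq_X_mul_alphaSeries_sq, map_mul, map_pow]

theorem αL_eq_one_add_βL_add_sq : αL = 1 + βL + βL ^ 2 := by
  simp only [αL, βL, alphaSeries_eq_one_add_betaSeries_add_sq, map_add, map_one, map_pow]

end LaurentSeries

theorem pow_seven_eq_one_of_pow_three_eq_add_one {S : Type*} [Semiring S] [CharP S 2] {x : S}
    (hx : x ^ 3 = x + 1) : x ^ 7 = 1 :=
  calc
    x ^ 7 = x * (x ^ 3) ^ 2 := by rw [← pow_mul, ← pow_succ']
    _ = x * (x ^ 2 + 1) := by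
      rw [hx, add_pow_char_of_commute 2 (Commute.one_right x), one_pow]
    _ = x ^ 3 + x := by rw [mul_add, mul_one, ← pow_succ']
    _ = 1 := by rw [hx, add_right_comm, CharTwo.add_self_eq_zero, zero_add]

section Matrix

open Matrix

variable {R : Type*} [CommRing R] {a b t u : R}

theorem charpoly_fin_three (M : Matrix (Fin 3) (Fin 3) R) :
    M.charpoly = .X ^ 3 - .C M.trace * .X ^ 2 + .C M.adjugate.trace * .X - .C M.det := by
  simp only [charpoly, det_fin_three, charmatrix_apply_eq, charmatrix_apply_ne, ne_eq, Fin.reduceEq,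
    not_false_eq_true, trace_fin_three, adjugate_fin_three, of_apply, cons_val, map_add, map_sub,
    map_mul]
  ring

theorem pow_three_fin_three (M : Matrix (Fin 3) (Fin 3) R) :
    M ^ 3 = M.trace • M ^ 2 - M.adjugate.trace • M + M.det • 1 := by
  have h := M.aeval_self_charpoly
  simp only [charpoly_fin_three, map_sub, map_add, map_mul, map_pow, Polynomial.aeval_X,
    Polynomial.aeval_C, Algebra.algebraMap_eq_smul_one, smul_one_mul] at h
  rw [← sub_eq_zero, ← h]
  abel

/-- The matrix `s`, with entries in an arbitrary commutative ring: `a`, `b` and `t` stand for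
`α`, `β` and the variable of the Laurent series field. -/
abbrev singerMatrix (a b t : R) : Matrix (Fin 3) (Fin 3) R :=
  !![0, 0, a; 1 + t * a, b, a; t * a, 1, b]

/-- The matrix `ρ`, with `u` standing for `t⁻¹`. -/
abbrev rotationMatrix (u : R) : Matrix (Fin 3) (Fin 3) R :=
  !![0, 0, u; 1, 0, 0; 0, 1, 0]

theorem det_rotationMatrix (u : R) : (rotationMatrix u).det = u := by
  simp [rotationMatrix, det_fin_three]

theorem singerMatrix_add_smul_one (a b t c : R) :
    singerMatrix a b t + c • 1 = !![c, 0, a; 1 + t * a, b + c, a; t * a, 1, b + c] := by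
  simp [one_fin_three]

theorem singerMatrix_add_smul_one_mul_rotationMatrix (htu : t * u = 1) (c : R) :
    (singerMatrix a b t + c • 1) * rotationMatrix u =
      !![0, a, c * u; b + c, a, u + a; 1, b + c, a] := by
  have h_mid : (1 + t * a) * u = u + a := by linear_combination a * htu
  have h_last : t * a * u = a := by linear_combination a * htu
  simp [singerMatrix_add_smul_one, h_mid, h_last]

variable [CharP R 2]

theorem trace_singerMatrix : (singerMatrix a b t).trace = 0 := by
  simp [singerMatrix, trace_fin_three, CharTwo.add_self_eq_zero]

theorem trace_adjugate_singerMatrix (hb : b = t * a ^ 2) (ha : a = 1 + b + b ^ 2) :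
    (singerMatrix a b t).adjugate.trace = 1 := by
  simp only [singerMatrix, adjugate_fin_three_of, trace_fin_three_of]
  grind

theorem det_singerMatrix_add_smul_one (hb : b = t * a ^ 2) (ha : a = 1 + b + b ^ 2) (c : R) :
    (singerMatrix a b t + c • 1).det = c ^ 3 + c + 1 := by
  simp only [singerMatrix_add_smul_one, det_fin_three, of_apply, cons_val]
  grind

theorem singerMatrix_pow_three (hb : b = t * a ^ 2) (ha : a = 1 + b + b ^ 2) :
    singerMatrix a b t ^ 3 = singerMatrix a b t + 1 := by
  have h_det : (singerMatrix a b t).det = 1 := by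
    simpa using det_singerMatrix_add_smul_one hb ha 0
  rw [pow_three_fin_three, trace_singerMatrix, trace_adjugate_singerMatrix hb ha, h_det, zero_smul,
    one_smul, one_smul, zero_sub, CharTwo.neg_eq]

theorem smul_singerMatrix_add_smul_one_mul_rotationMatrix_pow_three (htu : t * u = 1)
    (hb : b = t * a ^ 2) (ha : a = 1 + b + b ^ 2) (c : R) :
    t • ((singerMatrix a b t + c • 1) * rotationMatrix u) ^ 3 = (c ^ 3 + c + 1) • 1 := by
  have h_trace : ((singerMatrix a b t + c • 1) * rotationMatrix u).trace = 0 := by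
    simp [singerMatrix_add_smul_one_mul_rotationMatrix htu, trace_fin_three,
      CharTwo.add_self_eq_zero]
  have h_adjugate : ((singerMatrix a b t + c • 1) * rotationMatrix u).adjugate.trace = 0 := by
    rw [singerMatrix_add_smul_one_mul_rotationMatrix htu, adjugate_fin_three_of,
      trace_fin_three_of]
    grind
  rw [pow_three_fin_three, h_trace, h_adjugate, det_mul, det_rotationMatrix,
    det_singerMatrix_add_smul_one hb ha, zero_smul, zero_smul, sub_zero, zero_add, smul_smul,
    mul_left_comm, htu, mul_one]

theorem gamma21_matrix_relations_general (htu : t * u = 1) (hb : b = t * a ^ 2)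
    (ha : a = 1 + b + b ^ 2) :
    t • (singerMatrix a b t * rotationMatrix u) ^ 3 = 1 ∧
      t • (singerMatrix a b t ^ 3 * rotationMatrix u) ^ 3 = 1 ∧ singerMatrix a b t ^ 7 = 1 := by
  have h_pow := singerMatrix_pow_three hb ha
  have h_cube := smul_singerMatrix_add_smul_one_mul_rotationMatrix_pow_three htu hb ha
  refine ⟨by simpa using h_cube 0, ?_, pow_seven_eq_one_of_pow_three_eq_add_one h_pow⟩
  simpa [h_pow, CharTwo.add_self_eq_zero] using h_cube 1

end Matrix

/-- The matrices `s` and `ρ` over `𝔽₂((t))` satisfy `t·(sρ)³ = 1`,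
`t·(s³ρ)³ = 1` and `s⁷ = 1`; these are the defining relations of the Singer cyclic lattice
`Γ_{2,1}` realized in `PGL₃(𝔽₂((t)))`. -/
theorem gamma21_matrix_relations :
    let s : Matrix (Fin 3) (Fin 3) (LaurentSeries (ZMod 2)) :=
      !![0, 0, αL; 1 + tL * αL, βL, αL; tL * αL, 1, βL]
    let ρ : Matrix (Fin 3) (Fin 3) (LaurentSeries (ZMod 2)) :=
      !![0, 0, tL⁻¹; 1, 0, 0; 0, 1, 0]
    tL • (s * ρ) ^ 3 = 1 ∧ tL • (s ^ 3 * ρ) ^ 3 = 1 ∧ s ^ 7 = 1 := by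
  have := charP_laurentSeries (ZMod 2) 2
  -- At default transparency the unifier unfolds the multiplication of Laurent series and times out.
  with_reducible_and_instances
    exact gamma21_matrix_relations_general (mul_inv_cancel₀ tL_ne_zero) βL_eq_tL_mul_αL_sq
      αL_eq_one_add_βL_add_sq
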